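/- Consider the two-player game G constructed from a finite simple graph H as described, with desired sets O_1 = O_2 = C (the color-choice strategies). If H admits a proper 3-coloring, then there exists a payment promise 𝒱 such that 𝒳⋆_{G[𝒱]} = O_1 × O_2 and cost(𝒱) ≤ 1, i.e., 𝒱 implements O_1 × O_2 exactly with cost at most 1. -/

import Mathlib

/-!
Fix a proper coloring `φ`. A player is paid `1` exactly when playing a color choice `(v, φ v)`
against a color choice `(w, c)` with `c ≠ φ w`, and `0` otherwise (`colPay`). Then:

* `(v, φ v)` with its payment is at least as good as the vertex strategy `v` against every color
  choice (`vertex_dominated`). The cases where it is worse by `1` before payment are `(v, c)` with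
  `c ≠ φ v`, and `(u, φ v)` with `u` adjacent to `v`; in the second `φ u ≠ φ v` because `φ` is
  proper, so both are paid.
* Dummy strategies always yield `0` and are dominated by any color choice.
* A color choice `x` is undominated because it is the only strategy with nonzero utility against
  `d_x`.

The cost is at most `1` because a paid player follows `φ` while the opponent does not, so both
players are never paid at once.
-/

/-- In a game with player set `ι` and strategy sets `S i`, strategy `x` of player `i`
(weakly) dominates strategy `y`: `x` is at least as good against every profile of the
other players' strategies and strictly better against at least one. -/
def Dominates {ι : Type*} [DecidableEq ι] {S : ι → Type*}
    (U : ι → (∀ j, S j) → ℝ) (i : ι) (x y : S i) : Prop :=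
  (∀ σ : ∀ j, S j, U i (Function.update σ i y) ≤ U i (Function.update σ i x)) ∧
  (∃ σ : ∀ j, S j, U i (Function.update σ i y) < U i (Function.update σ i x))

/-- A strategy of player `i` is undominated if no strategy of player `i` dominates it. -/
def Undominated {ι : Type*} [DecidableEq ι] {S : ι → Type*}
    (U : ι → (∀ j, S j) → ℝ) (i : ι) (x : S i) : Prop :=
  ¬ ∃ y : S i, Dominates U i y x

/-- The set `𝒳⋆` of strategy profiles consisting entirely of undominated strategies. -/
def UndomProfiles {ι : Type*} [DecidableEq ι] {S : ι → Type*}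
    (U : ι → (∀ j, S j) → ℝ) : Set (∀ j, S j) :=
  {σ | ∀ i, Undominated U i (σ i)}

/-- The cost of a payment promise `V` for the game with utilities `U`:
the maximum, over undominated profiles of the modified game `G[V]`,
of the total payment. -/
noncomputable def gameCost {ι : Type*} [DecidableEq ι] [Fintype ι] {S : ι → Type*}
    (U V : ι → (∀ j, S j) → ℝ) : ℝ :=
  sSup ((fun σ => ∑ i, V i σ) '' UndomProfiles (fun i σ => U i σ + V i σ))

/-- The rectangular strategy-profile region `O_1 × ⋯ × O_n`. -/
def rectSet {ι : Type*} {S : ι → Type*} (O : ∀ i, Set (S i)) : Set (∀ j, S j) :=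
  {σ | ∀ i, σ i ∈ O i}

/-- The common strategy set of both players: a vertex strategy (left), a color-choice
strategy `(v, c)` (middle), or the dummy strategy `d_{(v,c)}` (right); the bijection
from color-choice strategies to dummy strategies is the identity on `V × Fin 3`. -/
abbrev ColStrat (V : Type*) : Type _ := V ⊕ ((V × Fin 3) ⊕ (V × Fin 3))

/-- Utility of player 1 in the 3-coloring game (first argument is player 1's strategy;
all unspecified values are 0):
`U_1((v,c₁),(v,c₂)) = 3` if `c₁ = c₂` and `2` otherwise; for adjacent `u, v`:
`U_1((u,c₁),(v,c₂)) = 1` if `c₁ = c₂` and `2` otherwise; `U_1(v,(v,c)) = 3`;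
`U_1(v,(u,c)) = 2` for `u` adjacent to `v`; `U_1(x, d_x) = 1` for color-choice `x`. -/
def colU1 {V : Type*} [DecidableEq V] (H : SimpleGraph V) [DecidableRel H.Adj] :
    ColStrat V → ColStrat V → ℝ
  | Sum.inr (Sum.inl (v, c1)), Sum.inr (Sum.inl (w, c2)) =>
      if w = v then (if c2 = c1 then 3 else 2)
      else if H.Adj v w then (if c2 = c1 then 1 else 2) else 0
  | Sum.inl v, Sum.inr (Sum.inl (w, _)) =>
      if w = v then 3 else if H.Adj v w then 2 else 0
  | Sum.inr (Sum.inl x), Sum.inr (Sum.inr y) => if y = x then 1 else 0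
  | _, _ => 0

/-- The symmetric two-player game built from the graph `H`. -/
def colGame {V : Type*} [DecidableEq V] (H : SimpleGraph V) [DecidableRel H.Adj] :
    Fin 2 → (Fin 2 → ColStrat V) → ℝ :=
  fun i σ => if i = 0 then colU1 H (σ 0) (σ 1) else colU1 H (σ 1) (σ 0)

/-- The desired strategy set `O_1 = O_2 = C`, the set of color-choice strategies. -/
def colDesired (V : Type*) : Set (ColStrat V) :=
  {s | ∃ p : V × Fin 3, s = Sum.inr (Sum.inl p)}

/-- In a two-player symmetric game with first-player utility `f`, dominance for either player is
dominance between rows of `f`. -/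
lemma dominates_symm_iff {A : Type*} (f : A → A → ℝ) (i : Fin 2) (x y : A) :
    Dominates (S := fun _ : Fin 2 => A)
      (fun i σ => if i = 0 then f (σ 0) (σ 1) else f (σ 1) (σ 0)) i x y ↔
    (∀ z, f y z ≤ f x z) ∧ ∃ z, f y z < f x z := by
  unfold Dominates
  fin_cases i
  · constructor
    · rintro ⟨h, σ, hσ⟩
      exact ⟨fun z => by simpa using h (fun _ => z), σ 1, by simpa using hσ⟩
    · rintro ⟨h, z, hz⟩
      exact ⟨fun σ => by simpa using h (σ 1), fun _ => z, by simpa using hz⟩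
  · constructor
    · rintro ⟨h, σ, hσ⟩
      exact ⟨fun z => by simpa using h (fun _ => z), σ 0, by simpa using hσ⟩
    · rintro ⟨h, z, hz⟩
      exact ⟨fun σ => by simpa using h (σ 0), fun _ => z, by simpa using hz⟩

/-- Payment to a player for playing the first argument against the second: `1` if both are color
choices, the player's own agrees with `φ` and the opponent's does not; `0` otherwise. -/
def colPay {V : Type*} (φ : V → Fin 3) : ColStrat V → ColStrat V → ℝ
  | Sum.inr (Sum.inl (v, c)), Sum.inr (Sum.inl (w, d)) => if c = φ v ∧ d ≠ φ w then 1 else 0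
  | _, _ => 0

lemma colPay_nonneg {V : Type*} (φ : V → Fin 3) (x y : ColStrat V) : 0 ≤ colPay φ x y := by
  rcases x with v | ⟨v, c⟩ | p <;> rcases y with w | ⟨w, d⟩ | q <;> simp only [colPay] <;>
    first | exact le_rfl | (split_ifs <;> norm_num)

lemma colPay_add_le {V : Type*} (φ : V → Fin 3) (x y : ColStrat V) :
    colPay φ x y + colPay φ y x ≤ 1 := by
  rcases x with v | ⟨v, c⟩ | p <;> rcases y with w | ⟨w, d⟩ | q <;> simp only [colPay] <;>
    try norm_num
  split_ifs with h1 h2 <;> first | (norm_num; done) | exact absurd h2.1 h1.2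

lemma colU1_nonneg {V : Type*} [DecidableEq V] (H : SimpleGraph V) [DecidableRel H.Adj]
    (x y : ColStrat V) : 0 ≤ colU1 H x y := by
  rcases x with v | ⟨v, c⟩ | p <;> rcases y with w | ⟨w, d⟩ | q <;> simp only [colU1] <;>
    first | exact le_rfl | (split_ifs <;> norm_num)

/-- Properness of `φ` makes the row of `(v, φ v)`, payments included, at least the row of `v`. -/
lemma vertex_dominated {V : Type*} [DecidableEq V] (H : SimpleGraph V) [DecidableRel H.Adj]
    (φ : V → Fin 3) (hφ : ∀ u w : V, H.Adj u w → φ u ≠ φ w) (v : V) (z : ColStrat V) :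
    colU1 H (Sum.inl v) z + colPay φ (Sum.inl v) z ≤
      colU1 H (Sum.inr (Sum.inl (v, φ v))) z + colPay φ (Sum.inr (Sum.inl (v, φ v))) z := by
  rcases z with w | ⟨w, d⟩ | q
  · simp [colU1, colPay]
  · have := hφ v w
    simp only [colU1, colPay]
    split_ifs <;> first | (norm_num; done) | (exfalso; grind)
  · simp only [colU1, colPay]
    split_ifs <;> norm_num


/-- if `H` admits a proper 3-coloring, then the constructed two-player
game has a payment promise implementing `O_1 × O_2` exactly with cost at most 1. -/
theorem coloring_game_forward {V : Type*} [Fintype V] [DecidableEq V]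
    (H : SimpleGraph V) [DecidableRel H.Adj]
    (hcol : ∃ φ : V → Fin 3, ∀ u w : V, H.Adj u w → φ u ≠ φ w) :
    ∃ W : Fin 2 → (Fin 2 → ColStrat V) → ℝ,
      (∀ i σ, 0 ≤ W i σ) ∧
      UndomProfiles (fun i σ => colGame H i σ + W i σ) =
        rectSet (fun _ : Fin 2 => colDesired V) ∧
      gameCost (colGame H) W ≤ 1 := by
  obtain ⟨φ, hφ⟩ := hcol
  have key : UndomProfiles (S := fun _ : Fin 2 => ColStrat V) (fun i σ => colGame H i σ +
      (if i = 0 then colPay φ (σ 0) (σ 1) else colPay φ (σ 1) (σ 0))) =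
        rectSet (fun _ : Fin 2 => colDesired V) := by
    have hU : (fun (i : Fin 2) (σ : Fin 2 → ColStrat V) => colGame H i σ +
        (if i = 0 then colPay φ (σ 0) (σ 1) else colPay φ (σ 1) (σ 0))) =
        fun i σ => if i = 0 then colU1 H (σ 0) (σ 1) + colPay φ (σ 0) (σ 1)
          else colU1 H (σ 1) (σ 0) + colPay φ (σ 1) (σ 0) := by
      funext i σ
      unfold colGame
      split_ifs <;> rfl
    rw [hU]
    ext σ
    refine forall_congr' fun i => ?_
    unfold Undominated
    simp only [dominates_symm_iff (fun x y => colU1 H x y + colPay φ x y)]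
    rcases σ i with v | p | p
    · -- the vertex strategy `v` loses strictly to `(v, φ v)` against the dummy of `(v, φ v)`
      refine iff_of_false (not_not.2 ⟨Sum.inr (Sum.inl (v, φ v)),
        vertex_dominated H φ hφ v, Sum.inr (Sum.inr (v, φ v)), by simp [colU1, colPay]⟩) ?_
      rintro ⟨q, hq⟩
      simp at hq
    · refine iff_of_true ?_ ⟨p, rfl⟩
      rintro ⟨y, hy, z, hz⟩
      -- against `d_p` only `p` itself has positive utility, so a dominating `y` equals `p`
      have h := hy (Sum.inr (Sum.inr p))
      rcases y with w | q | q
      · simp [colU1, colPay] at h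
        linarith
      · by_cases hpq : p = q
        · subst hpq
          exact lt_irrefl _ hz
        · simp [colU1, colPay, hpq] at h
          linarith
      · simp [colU1, colPay] at h
        linarith
    · refine iff_of_false (not_not.2 ⟨Sum.inr (Sum.inl p), fun z => ?_,
        Sum.inr (Sum.inr p), by simp [colU1, colPay]⟩) ?_
      · have h1 := colU1_nonneg H (Sum.inr (Sum.inl p)) z
        have h2 := colPay_nonneg φ (Sum.inr (Sum.inl p)) z
        simpa [colU1, colPay] using add_nonneg h1 h2
      · rintro ⟨q, hq⟩
        simp at hq
  refine ⟨fun i σ => if i = 0 then colPay φ (σ 0) (σ 1) else colPay φ (σ 1) (σ 0), ?_, key, ?_⟩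
  · intro i σ
    dsimp only
    split_ifs <;> exact colPay_nonneg _ _ _
  · -- `Real.sSup_le` also covers the empty set of profiles (no vertices), where `sSup` is `0`
    refine Real.sSup_le ?_ zero_le_one
    rintro _ ⟨σ, -, rfl⟩
    simpa [Fin.sum_univ_two] using colPay_add_le φ (σ 0) (σ 1)
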